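/- Correctness of the classical translation of finitely-valued models: Fix a finite relational vocabulary τ without equality and a finite algebra A ⊆ [0,1] closed under the truth functions. For every A-valued model 𝔐 over τ with nonempty domain, every formula φ with a tuple ā of parameters, and every a ∈ A: ‖φ[ā]‖_𝔐 = a if and only if 𝔐* ⊨ T^a(φ)[ā], where 𝔐* is the classical τ*-structure with the same domain interpreting each P_i^{na} as {ā : P^n_{i,𝔐}(ā) = a}. Moreover 𝔐* is a model of Σ, and every classical model of Σ equals 𝔐* for a unique A-valued model 𝔐. -/

import Mathlib

/-! Statement 10: Correctness of the classical translation of finitely-valued models. -/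

open Classical

noncomputable section

instance : Fact ((0:ℝ) ≤ 1) := ⟨zero_le_one⟩

/-- The real unit interval, as the set of truth values. -/
abbrev UI : Type := unitInterval

/-- A relational vocabulary: a type of predicate symbols with arities. -/
structure Vocab : Type 1 where
  Pred : Type
  arity : Pred → ℕ

/-- A family of (propositional) connectives with arities. -/
structure Conns : Type 1 where
  Conn : Type
  carity : Conn → ℕ

/-- A real-valued logic: a truth function for each connective. -/
def TruthFns (C : Conns) : Type := ∀ c : C.Conn, (Fin (C.carity c) → UI) → UI

/-- First-order formulas over the vocabulary `V` and connectives `C`,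
with variables named by natural numbers. -/
inductive Formula (V : Vocab) (C : Conns) : Type
  | pred (P : V.Pred) (v : Fin (V.arity P) → ℕ) : Formula V C
  | conn (c : C.Conn) (args : Fin (C.carity c) → Formula V C) : Formula V C
  | all (y : ℕ) (φ : Formula V C) : Formula V C
  | ex (y : ℕ) (φ : Formula V C) : Formula V C

/-- A real-valued first-order model with domain `M`. -/
structure Model (V : Vocab) (M : Type) where
  interp : ∀ P : V.Pred, (Fin (V.arity P) → M) → UI

variable {V : Vocab} {C : Conns} {M : Type}

/-- The truth value of a formula at a valuation `ν : ℕ → M`: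
connectives are computed by their truth functions, `∀` by infimum over the
domain and `∃` by supremum over the domain. -/
def eval (truth : TruthFns C) (𝔐 : Model V M) : Formula V C → (ℕ → M) → UI
  | .pred P v => fun ν => 𝔐.interp P fun i => ν (v i)
  | .conn c args => fun ν => truth c fun i => eval truth 𝔐 (args i) ν
  | .all y φ => fun ν => ⨅ e : M, eval truth 𝔐 φ (Function.update ν y e)
  | .ex y φ => fun ν => ⨆ e : M, eval truth 𝔐 φ (Function.update ν y e)

/-- A multi-dimensional sentence over the domain `M`: a finite sequence of
component formulas together with an information set `S` of tuples of
interpretations. -/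
structure MDSentence (V : Vocab) (C : Conns) (M : Type) where
  k : ℕ
  comps : Fin k → Formula V C
  S : Set (Fin k → (ℕ → M) → UI)

/-- Satisfaction: the tuple of interpretations of the components lies in `S`. -/
def Sat (truth : TruthFns C) (𝔐 : Model V M) (σ : MDSentence V C M) : Prop :=
  (fun i => eval truth 𝔐 (σ.comps i)) ∈ σ.S

/-- A tuple is *good* for the components `comps` if it respects the semantics
of the connectives and quantifiers wherever the immediate subformulas of a
component also occur among the components. -/
def GoodTuple (truth : TruthFns C) {k : ℕ} (comps : Fin k → Formula V C)
    (f : Fin k → (ℕ → M) → UI) : Prop :=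
  (∀ (m : Fin k) (c : C.Conn) (args : Fin (C.carity c) → Formula V C)
      (g : Fin (C.carity c) → Fin k),
      comps m = .conn c args → (∀ j, comps (g j) = args j) →
      f m = fun ν => truth c fun j => f (g j) ν) ∧
  (∀ (i j : Fin k) (y : ℕ) (φ : Formula V C), comps i = .all y φ → comps j = φ →
      f i = fun ν => ⨅ e : M, f j (Function.update ν y e)) ∧
  (∀ (i j : Fin k) (y : ℕ) (φ : Formula V C), comps i = .ex y φ → comps j = φ →
      f i = fun ν => ⨆ e : M, f j (Function.update ν y e))

/-- Classical first-order formulas over the starred vocabulary `τ*`, which has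
a predicate `P^a` for each predicate `P` of `τ` and each truth value `a ∈ A`,
with finite conjunctions and disjunctions (given by lists), negation and
quantifiers. -/
inductive CFormula (V : Vocab) (A : Finset UI) : Type
  | pred (P : V.Pred) (a : ↥A) (v : Fin (V.arity P) → ℕ) : CFormula V A
  | ands (l : List (CFormula V A)) : CFormula V A
  | ors (l : List (CFormula V A)) : CFormula V A
  | not (φ : CFormula V A) : CFormula V A
  | call (y : ℕ) (φ : CFormula V A) : CFormula V A
  | cex (y : ℕ) (φ : CFormula V A) : CFormula V A

/-- A classical structure for the starred vocabulary `τ*`. -/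
structure CModel (V : Vocab) (A : Finset UI) (M : Type) where
  interp : ∀ P : V.Pred, ↥A → (Fin (V.arity P) → M) → Prop

/-- Classical (two-valued) satisfaction of starred formulas. -/
def csat {V : Vocab} {A : Finset UI} {M : Type} (𝔑 : CModel V A M) :
    CFormula V A → (ℕ → M) → Prop
  | .pred P a v => fun ν => 𝔑.interp P a fun i => ν (v i)
  | .ands l => fun ν => ∀ ψ ∈ l.attach, csat 𝔑 ψ.1 ν
  | .ors l => fun ν => ∃ ψ ∈ l.attach, csat 𝔑 ψ.1 ν
  | .not φ => fun ν => ¬ csat 𝔑 φ ν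
  | .call y φ => fun ν => ∀ e : M, csat 𝔑 φ (Function.update ν y e)
  | .cex y φ => fun ν => ∃ e : M, csat 𝔑 φ (Function.update ν y e)
decreasing_by
  all_goals simp_wf
  all_goals first
    | (have h := List.sizeOf_lt_of_mem ψ.2; omega)
    | omega

/-- The translation `T^a` of a many-valued formula into a classical starred
formula: `T^a(P x̄) = P^a x̄`; `T^a(∘(ψ₁,…,ψ_n))` is the disjunction over all
tuples `b ∈ A^n` with `∘(b₁,…,b_n) = a` of the conjunctions `⋀ᵢ T^{bᵢ}(ψᵢ)`;
for the quantifiers, a disjunction over all tuples `b₁,…,b_k ∈ A`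
(`1 ≤ k ≤ |A|`) whose max (resp. min) is `a` of `⋀ᵢ ∃x T^{bᵢ}(ψ)`, in
conjunction with `∀x ⋁_{b ≤ a} T^b(ψ)` (resp. `∀x ⋁_{b ≥ a} T^b(ψ)`); the
last conjunct is the paper's `∀y ⋁_b T^b(ψ(y/x))` up to α-equivalence. -/
def transl {V : Vocab} {C : Conns} (truth : TruthFns C) (A : Finset UI) :
    Formula V C → ↥A → CFormula V A
  | .pred P v => fun a => .pred P a v
  | .conn c args => fun a =>
      .ors (((Finset.univ.filter
          (fun b : Fin (C.carity c) → ↥A =>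
            truth c (fun i => (b i : UI)) = (a : UI))).toList.map
        (fun b => CFormula.ands
          (List.ofFn fun i => transl truth A (args i) (b i)))))
  | .ex y φ => fun a =>
      .ands [
        .ors ((List.range A.card).flatMap (fun m =>
          ((Finset.univ.filter
              (fun b : Fin (m+1) → ↥A => (⨆ i, (b i : UI)) = (a : UI))).toList.map
            (fun b => CFormula.ands
              (List.ofFn fun i : Fin (m+1) =>
                CFormula.cex y (transl truth A φ (b i))))))),
        .call y (.ors ((Finset.univ.filter
            (fun b : ↥A => (b : UI) ≤ (a : UI))).toList.map
          (fun b => transl truth A φ b)))]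
  | .all y φ => fun a =>
      .ands [
        .ors ((List.range A.card).flatMap (fun m =>
          ((Finset.univ.filter
              (fun b : Fin (m+1) → ↥A => (⨅ i, (b i : UI)) = (a : UI))).toList.map
            (fun b => CFormula.ands
              (List.ofFn fun i : Fin (m+1) =>
                CFormula.cex y (transl truth A φ (b i))))))),
        .call y (.ors ((Finset.univ.filter
            (fun b : ↥A => (a : UI) ≤ (b : UI))).toList.map
          (fun b => transl truth A φ b)))]

/-- Universal closure over the variables `0, …, n-1`. -/
def foralls {V : Vocab} {A : Finset UI} : ℕ → CFormula V A → CFormula V A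
  | 0, φ => φ
  | n + 1, φ => .call n (foralls n φ)

/-- The axiom of `Σ` saying that each tuple satisfies `P^a` for some
`a ∈ A`. -/
def totalAx {V : Vocab} (A : Finset UI) (P : V.Pred) : CFormula V A :=
  foralls (V.arity P)
    (.ors ((Finset.univ : Finset ↥A).toList.map
      (fun a => CFormula.pred P a (fun i => (i : ℕ)))))

/-- The axiom of `Σ` saying that no tuple satisfies both `P^a` and `P^b` for
`a ≠ b`. -/
def exclAx {V : Vocab} (A : Finset UI) (P : V.Pred) (a b : ↥A) : CFormula V A :=
  foralls (V.arity P)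
    (.not (.ands [CFormula.pred P a (fun i => (i : ℕ)),
                  CFormula.pred P b (fun i => (i : ℕ))]))

/-- The classical theory `Σ`. -/
def SigmaTheory (V : Vocab) (A : Finset UI) : Set (CFormula V A) :=
  {ψ | (∃ P : V.Pred, ψ = totalAx A P) ∨
       (∃ (P : V.Pred) (a b : ↥A), a ≠ b ∧ ψ = exclAx A P a b)}

/-- A classical structure is a model of `Σ` when it satisfies every member of
`Σ` at every valuation. -/
def SatSigma {V : Vocab} {M : Type} (A : Finset UI) (𝔑 : CModel V A M) : Prop :=
  ∀ ψ ∈ SigmaTheory V A, ∀ ν : ℕ → M, csat 𝔑 ψ ν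

/-- The classical structure `𝔐*` associated with a many-valued model `𝔐`:
`P^a` holds of a tuple iff `P` takes value `a` there. -/
def star {V : Vocab} {M : Type} (A : Finset UI) (𝔐 : Model V M) :
    CModel V A M :=
  ⟨fun P a t => 𝔐.interp P t = (a : UI)⟩

theorem csat_ands_iff {V : Vocab} {A : Finset UI} {M : Type} (N : CModel V A M)
    (l : List (CFormula V A)) (ν : ℕ → M) :
    csat N (.ands l) ν ↔ ∀ ψ ∈ l, csat N ψ ν := by
  rw [csat]
  constructor
  · intro h ψ hψ
    exact h ⟨ψ, hψ⟩ (List.mem_attach _ _)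
  · intro h ψ _
    exact h ψ.1 ψ.2

theorem csat_ors_iff {V : Vocab} {A : Finset UI} {M : Type} (N : CModel V A M)
    (l : List (CFormula V A)) (ν : ℕ → M) :
    csat N (.ors l) ν ↔ ∃ ψ ∈ l, csat N ψ ν := by
  rw [csat]
  constructor
  · rintro ⟨ψ, _, h⟩
    exact ⟨ψ.1, ψ.2, h⟩
  · rintro ⟨ψ, hψ, h⟩
    exact ⟨⟨ψ, hψ⟩, List.mem_attach _ _, h⟩

theorem foralls_iff {V : Vocab} {A : Finset UI} {M : Type} (N : CModel V A M)
    (n : ℕ) (φ : CFormula V A) :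
    (∀ ν, csat N (foralls n φ) ν) ↔ ∀ ν, csat N φ ν := by
  induction n with
  | zero => rfl
  | succ n ih =>
    rw [← ih]
    simp only [foralls, csat]
    constructor
    · intro h ν
      have := h ν (ν n)
      rwa [Function.update_eq_self] at this
    · intro h ν e
      exact h _

theorem exists_eq_iSup {M : Type} [Nonempty M] (A : Finset UI) (f : M → UI)
    (hf : ∀ e, f e ∈ A) : ∃ e, ⨆ e, f e = f e := by
  have hfin : (Set.range f).Finite :=
    A.finite_toSet.subset (by rintro _ ⟨e, rfl⟩; exact hf e)
  obtain ⟨_, ⟨e, rfl⟩, he⟩ := Set.exists_max_image (Set.range f) id hfin (Set.range_nonempty f)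
  exact ⟨e, le_antisymm (iSup_le fun e' => he _ ⟨e', rfl⟩) (le_iSup f e)⟩

theorem exists_eq_iInf {M : Type} [Nonempty M] (A : Finset UI) (f : M → UI)
    (hf : ∀ e, f e ∈ A) : ∃ e, ⨅ e, f e = f e := by
  have hfin : (Set.range f).Finite :=
    A.finite_toSet.subset (by rintro _ ⟨e, rfl⟩; exact hf e)
  obtain ⟨_, ⟨e, rfl⟩, he⟩ := Set.exists_min_image (Set.range f) id hfin (Set.range_nonempty f)
  exact ⟨e, le_antisymm (iInf_le f e) (le_iInf fun e' => he _ ⟨e', rfl⟩)⟩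

theorem eval_mem {V : Vocab} {C : Conns} {M : Type} [Nonempty M] (truth : TruthFns C)
    (A : Finset UI)
    (hA : ∀ (c : C.Conn) (b : Fin (C.carity c) → UI),
        (∀ i, b i ∈ A) → truth c b ∈ A)
    (𝔐 : Model V M) (h𝔐 : ∀ P t, 𝔐.interp P t ∈ A) (φ : Formula V C) (ν : ℕ → M) :
    eval truth 𝔐 φ ν ∈ A := by
  induction φ generalizing ν with
  | pred P v => exact h𝔐 _ _
  | conn c args ih => exact hA _ _ fun i => ih i ν
  | all y φ ih =>
    obtain ⟨e, he⟩ := exists_eq_iInf A _ (fun e => ih (Function.update ν y e))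
    have := ih (Function.update ν y e)
    rw [← he] at this
    exact this
  | ex y φ ih =>
    obtain ⟨e, he⟩ := exists_eq_iSup A _ (fun e => ih (Function.update ν y e))
    have := ih (Function.update ν y e)
    rw [← he] at this
    exact this

theorem transl_correct {V : Vocab} {C : Conns} {M : Type} [Nonempty M] (truth : TruthFns C)
    (A : Finset UI)
    (hA : ∀ (c : C.Conn) (b : Fin (C.carity c) → UI),
        (∀ i, b i ∈ A) → truth c b ∈ A)
    (𝔐 : Model V M) (h𝔐 : ∀ P t, 𝔐.interp P t ∈ A) (φ : Formula V C) (ν : ℕ → M) (a : ↥A) :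
    eval truth 𝔐 φ ν = (a : UI) ↔ csat (star A 𝔐) (transl truth A φ a) ν := by
  have hmem := eval_mem truth A hA 𝔐 h𝔐
  have hpos : 0 < A.card := Finset.card_pos.2 ⟨a.1, a.2⟩
  induction φ generalizing ν a with
  | pred P v => simp only [eval, transl, csat, _root_.star]
  | conn c args ih =>
    rw [transl, csat_ors_iff]
    simp only [List.mem_map, Finset.mem_toList, Finset.mem_filter, Finset.mem_univ, true_and,
      exists_exists_and_eq_and, csat_ands_iff, List.forall_mem_ofFn_iff, ← ih, eval]
    constructor
    · intro h
      exact ⟨fun i => ⟨_, hmem (args i) ν⟩, h, fun i => rfl⟩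
    · rintro ⟨b, hb, h⟩
      rw [← hb]
      congr 1
      funext i
      exact h i
  | all y φ ih =>
    rw [transl, csat_ands_iff]
    simp only [List.mem_cons, List.not_mem_nil, or_false, forall_eq_or_imp, forall_eq,
      csat_ors_iff, List.mem_flatMap, List.mem_range, List.mem_map, Finset.mem_toList,
      Finset.mem_filter, Finset.mem_univ, true_and, csat, eval]
    obtain ⟨e, he⟩ := exists_eq_iInf A _ (fun e => hmem φ (Function.update ν y e))
    constructor
    · intro h
      refine ⟨⟨_, ⟨0, hpos, fun _ => a, ciInf_const, rfl⟩, ?_⟩, fun e' => ?_⟩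
      · rw [csat_ands_iff, List.forall_mem_ofFn_iff]
        intro i
        rw [csat]
        exact ⟨e, (ih _ _).1 (he.symm.trans h)⟩
      · refine ⟨_, ⟨⟨_, hmem φ (Function.update ν y e')⟩, ?_, rfl⟩, (ih _ _).1 rfl⟩
        rw [← h]
        exact iInf_le (fun e => eval truth 𝔐 φ (Function.update ν y e)) e'
    · rintro ⟨⟨_, ⟨m, _, b, hb, rfl⟩, h1⟩, h2⟩
      rw [csat_ands_iff, List.forall_mem_ofFn_iff] at h1
      apply le_antisymm
      · rw [← hb]
        refine le_iInf fun i => ?_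
        have := h1 i
        rw [csat] at this
        obtain ⟨e', he'⟩ := this
        rw [← (ih _ _).2 he']
        exact iInf_le (fun e => eval truth 𝔐 φ (Function.update ν y e)) e'
      · refine le_iInf fun e' => ?_
        obtain ⟨_, ⟨c, hc, rfl⟩, h⟩ := h2 e'
        rw [(ih _ _).2 h]
        exact hc
  | ex y φ ih =>
    rw [transl, csat_ands_iff]
    simp only [List.mem_cons, List.not_mem_nil, or_false, forall_eq_or_imp, forall_eq,
      csat_ors_iff, List.mem_flatMap, List.mem_range, List.mem_map, Finset.mem_toList,
      Finset.mem_filter, Finset.mem_univ, true_and, csat, eval]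
    obtain ⟨e, he⟩ := exists_eq_iSup A _ (fun e => hmem φ (Function.update ν y e))
    constructor
    · intro h
      refine ⟨⟨_, ⟨0, hpos, fun _ => a, ciSup_const, rfl⟩, ?_⟩, fun e' => ?_⟩
      · rw [csat_ands_iff, List.forall_mem_ofFn_iff]
        intro i
        rw [csat]
        exact ⟨e, (ih _ _).1 (he.symm.trans h)⟩
      · refine ⟨_, ⟨⟨_, hmem φ (Function.update ν y e')⟩, ?_, rfl⟩, (ih _ _).1 rfl⟩
        rw [← h]
        exact le_iSup (fun e => eval truth 𝔐 φ (Function.update ν y e)) e'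
    · rintro ⟨⟨_, ⟨m, _, b, hb, rfl⟩, h1⟩, h2⟩
      rw [csat_ands_iff, List.forall_mem_ofFn_iff] at h1
      apply ge_antisymm
      · rw [← hb]
        refine iSup_le fun i => ?_
        have := h1 i
        rw [csat] at this
        obtain ⟨e', he'⟩ := this
        rw [← (ih _ _).2 he']
        exact le_iSup (fun e => eval truth 𝔐 φ (Function.update ν y e)) e'
      · refine iSup_le fun e' => ?_
        obtain ⟨_, ⟨c, hc, rfl⟩, h⟩ := h2 e'
        rw [(ih _ _).2 h]
        exact hc

/-- **Correctness of the classical translation** (after Badia–Noguera): for a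
finite relational vocabulary without equality and a finite algebra
`A ⊆ [0,1]` (with `0, 1 ∈ A`) closed under the truth functions: for every
`A`-valued model `𝔐`, formula `φ`, valuation and `a ∈ A`, `‖φ‖ = a` iff
`𝔐* ⊨ T^a(φ)`; moreover `𝔐*` is a model of `Σ`, and every classical model
of `Σ` equals `𝔐*` for a unique `A`-valued `𝔐`. -/
theorem translation_correctness
    (V : Vocab) (hVfin : Finite V.Pred) (C : Conns) (truth : TruthFns C)
    (A : Finset UI) (h0 : (0 : UI) ∈ A) (h1 : (1 : UI) ∈ A)
    (hA : ∀ (c : C.Conn) (b : Fin (C.carity c) → UI),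
        (∀ i, b i ∈ A) → truth c b ∈ A)
    (M : Type) (hM : Nonempty M) :
    (∀ 𝔐 : Model V M, (∀ P t, 𝔐.interp P t ∈ A) →
      ((∀ (φ : Formula V C) (ν : ℕ → M) (a : ↥A),
          eval truth 𝔐 φ ν = (a : UI) ↔
            csat (star A 𝔐) (transl truth A φ a) ν) ∧
        SatSigma A (star A 𝔐))) ∧
    (∀ 𝔑 : CModel V A M, SatSigma A 𝔑 →
      ∃! 𝔐 : Model V M, (∀ P t, 𝔐.interp P t ∈ A) ∧ star A 𝔐 = 𝔑) := by
  have := hM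
  refine ⟨fun 𝔐 h𝔐 => ⟨transl_correct truth A hA 𝔐 h𝔐, ?_⟩, fun 𝔑 h𝔑 => ?_⟩
  · rintro ψ (⟨P, rfl⟩ | ⟨P, a, b, hab, rfl⟩)
    · rw [totalAx, foralls_iff]
      intro ν
      rw [csat_ors_iff]
      refine ⟨_, List.mem_map.2 ⟨⟨_, h𝔐 P fun i => ν i⟩, by simp, rfl⟩, ?_⟩
      simp only [csat, _root_.star]
    · rw [exclAx, foralls_iff]
      intro ν
      rw [csat]
      beta_reduce
      rw [csat_ands_iff]
      simp only [List.mem_cons, List.not_mem_nil, or_false, forall_eq_or_imp, forall_eq, csat, _root_.star]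
      rintro ⟨ha, hb⟩
      exact hab (Subtype.ext (ha.symm.trans hb))
  · have ext : ∀ (n : ℕ) (t : Fin n → M), ∃ ν : ℕ → M, (fun i : Fin n => ν i) = t := by
      intro n t
      refine ⟨fun k => if h : k < n then t ⟨k, h⟩ else Classical.choice hM, ?_⟩
      funext i
      simp
    have tot : ∀ P t, ∃ a, 𝔑.interp P a t := by
      intro P t
      obtain ⟨ν, rfl⟩ := ext _ t
      have h := (foralls_iff 𝔑 _ _).1 (h𝔑 _ (Or.inl ⟨P, rfl⟩)) ν
      rw [csat_ors_iff] at h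
      obtain ⟨_, hm, h⟩ := h
      obtain ⟨a, _, rfl⟩ := List.mem_map.1 hm
      rw [csat] at h
      exact ⟨a, h⟩
    have excl : ∀ P t a b, 𝔑.interp P a t → 𝔑.interp P b t → a = b := by
      intro P t a b ha hb
      by_contra hab
      obtain ⟨ν, rfl⟩ := ext _ t
      have h := (foralls_iff 𝔑 _ _).1 (h𝔑 _ (Or.inr ⟨P, a, b, hab, rfl⟩)) ν
      rw [csat] at h
      beta_reduce at h
      rw [csat_ands_iff] at h
      apply h
      simp only [List.mem_cons, List.not_mem_nil, or_false, forall_eq_or_imp, forall_eq, csat]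
      exact ⟨ha, hb⟩
    choose f hf using tot
    refine ⟨⟨fun P t => f P t⟩, ⟨fun P t => (f P t).2, ?_⟩, ?_⟩
    · obtain ⟨I⟩ := 𝔑
      simp only [_root_.star, CModel.mk.injEq]
      funext P a t
      apply propext
      constructor
      · intro h
        have h' : f P t = a := Subtype.ext h
        rw [← h']
        exact hf P t
      · intro h
        exact congrArg Subtype.val (excl P t _ _ (hf P t) h)
    · rintro ⟨J⟩ ⟨hJ, rfl⟩
      simp only [Model.mk.injEq]
      funext P t
      exact hf P t
end
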